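/- arXiv:2010.06236 — 3 statements merged into one kernel-verified Lean document; each statement's English description precedes it below -/
import Mathlib

section
/- If the gain L ∈ ℝ^{m×n} is admissible, then there exists a unique n×n real matrix X satisfying X = 𝒯_L(X) + D; this X is symmetric positive definite, and for every symmetric positive semidefinite initial matrix Σ_0 the closed-loop covariance recursion Σ_{k+1} = 𝒯_L(Σ_k) + D converges to X as k → ∞. -/
open Matrix Filter Topology

/-- The sandwich map `X ↦ M * X * Mᵀ` as a linear endomorphism of `n × n` real matrices. -/
noncomputable def sandwich {n : ℕ} (M : Matrix (Fin n) (Fin n) ℝ) :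
    Module.End ℝ (Matrix (Fin n) (Fin n) ℝ) :=
  (LinearMap.mulLeft ℝ M).comp (LinearMap.mulRight ℝ Mᵀ)

/-- The closed-loop covariance operator
`𝒯_L(X) = (A+BL) X (A+BL)ᵀ + Σᵢ ᾱᵢ Aᵢ X Aᵢᵀ + Σⱼ β̄ⱼ (BⱼL) X (BⱼL)ᵀ`. -/
noncomputable def calT {n m p q : ℕ}
    (A : Matrix (Fin n) (Fin n) ℝ) (A' : Fin p → Matrix (Fin n) (Fin n) ℝ)
    (B : Matrix (Fin n) (Fin m) ℝ) (B' : Fin q → Matrix (Fin n) (Fin m) ℝ)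
    (al : Fin p → ℝ) (be : Fin q → ℝ) (L : Matrix (Fin m) (Fin n) ℝ) :
    Module.End ℝ (Matrix (Fin n) (Fin n) ℝ) :=
  sandwich (A + B * L) + ∑ i, al i • sandwich (A' i) + ∑ j, be j • sandwich (B' j * L)

/-- The (trace-)adjoint operator
`𝒯_L^*(P) = (A+BL)ᵀ P (A+BL) + Σᵢ ᾱᵢ Aᵢᵀ P Aᵢ + Σⱼ β̄ⱼ Lᵀ Bⱼᵀ P Bⱼ L`. -/
noncomputable def calTstar {n m p q : ℕ}
    (A : Matrix (Fin n) (Fin n) ℝ) (A' : Fin p → Matrix (Fin n) (Fin n) ℝ)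
    (B : Matrix (Fin n) (Fin m) ℝ) (B' : Fin q → Matrix (Fin n) (Fin m) ℝ)
    (al : Fin p → ℝ) (be : Fin q → ℝ) (L : Matrix (Fin m) (Fin n) ℝ) :
    Module.End ℝ (Matrix (Fin n) (Fin n) ℝ) :=
  sandwich (A + B * L)ᵀ + ∑ i, al i • sandwich (A' i)ᵀ + ∑ j, be j • sandwich (B' j * L)ᵀ

/-- A gain `L` is admissible if the spectral radius of `𝒯_L`, as a linear endomorphism of
the space of `n × n` real matrices, is strictly less than `1`. -/
noncomputable def Admissible {n m p q : ℕ}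
    (A : Matrix (Fin n) (Fin n) ℝ) (A' : Fin p → Matrix (Fin n) (Fin n) ℝ)
    (B : Matrix (Fin n) (Fin m) ℝ) (B' : Fin q → Matrix (Fin n) (Fin m) ℝ)
    (al : Fin p → ℝ) (be : Fin q → ℝ) (L : Matrix (Fin m) (Fin n) ℝ) : Prop :=
  spectralRadius ℝ (calT A A' B B' al be L) < 1

/-!
Write `T` for the covariance operator. Admissibility controls only the real spectrum of `T`, so
positivity has to do the rest. For `t ∈ [0, 1]` the equation `X_t = t T X_t + D` has a unique
solution, which depends continuously on `t`, and `X_t ⪰ 0` forces `X_t = t T X_t + D ≻ 0`; the set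
of `t` with `X_t ⪰ 0` is therefore closed, open and contains `0`, so `X = X_1 ≻ 0`. The sums
`∑_{k < N} T^k D = X - T^N X ⪯ X` are bounded, hence `T^k D → 0`. Finally `T` is `2`-positive: for
every `Z` and small `ε`, the block matrix `[[D, εZ], [εZᴴ, D]]` is positive semidefinite and stays
so under the powers of `T`, so `T^k Z` is dominated by `T^k D` and tends to `0`.
-/

open scoped ComplexOrder

section SpectralRadius

variable {𝕜 : Type*}

theorem isUnit_one_sub_smul_of_spectralRadius_lt_one [NormedField 𝕜] {A : Type*} [Ring A]
    [Algebra 𝕜 A] {a : A} (ha : spectralRadius 𝕜 a < 1) {t : 𝕜} (ht : ‖t‖ ≤ 1) :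
    IsUnit (1 - t • a) := by
  rcases eq_or_ne t 0 with rfl | ht0
  · simp
  have hinv : 1 ≤ ‖t⁻¹‖₊ := by
    rw [nnnorm_inv]
    exact (one_le_inv₀ (nnnorm_pos.2 ht0)).2 ht
  have hres : IsUnit (algebraMap 𝕜 A t⁻¹ - a) :=
    spectrum.mem_resolventSet_of_spectralRadius_lt (ha.trans_le (mod_cast hinv))
  have hsmul : 1 - t • a = Units.mk0 t ht0 • (algebraMap 𝕜 A t⁻¹ - a) := by
    simp [Units.smul_def, Algebra.algebraMap_eq_smul_one, smul_sub, smul_smul, ht0]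
  exact hsmul ▸ hres.smul _

theorem eq_of_eq_smul_apply_add_of_spectralRadius_lt_one [NormedField 𝕜] {E : Type*}
    [AddCommGroup E] [Module 𝕜 E] {T : Module.End 𝕜 E} (hT : spectralRadius 𝕜 T < 1) {t : 𝕜}
    (ht : ‖t‖ ≤ 1) {D X Y : E} (hX : X = t • T X + D) (hY : Y = t • T Y + D) : X = Y := by
  have hinj : Function.Injective (1 - t • T : Module.End 𝕜 E) :=
    ((Module.End.isUnit_iff _).1 (isUnit_one_sub_smul_of_spectralRadius_lt_one hT ht)).1
  apply hinj
  calc X - t • T X = D := sub_eq_of_eq_add' hX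
    _ = Y - t • T Y := (sub_eq_of_eq_add' hY).symm

theorem exists_continuousOn_eq_smul_apply_add_of_spectralRadius_lt_one
    [NontriviallyNormedField 𝕜] [CompleteSpace 𝕜] {E : Type*} [NormedAddCommGroup E]
    [NormedSpace 𝕜 E] [FiniteDimensional 𝕜 E] {T : Module.End 𝕜 E}
    (hT : spectralRadius 𝕜 T < 1) (D : E) :
    ∃ X : 𝕜 → E, ContinuousOn X (Metric.closedBall 0 1) ∧
      ∀ t ∈ Metric.closedBall (0 : 𝕜) 1, X t = t • T (X t) + D := by
  have : CompleteSpace E := FiniteDimensional.complete 𝕜 E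
  let T' : E →L[𝕜] E := Module.End.toContinuousLinearMap E T
  have hT' : spectralRadius 𝕜 T' < 1 := by
    rwa [spectralRadius, AlgEquiv.spectrum_eq]
  refine ⟨fun t ↦ Ring.inverse (1 - t • T') D, ?_, fun t ht ↦ ?_⟩
  · have hinv := spectrum.differentiableOn_inverse_one_sub_smul (r := 1) (ENNReal.one_lt_inv.2 hT')
    exact hinv.continuousOn.clm_apply continuousOn_const
  · have hunit := isUnit_one_sub_smul_of_spectralRadius_lt_one hT' (mem_closedBall_zero_iff.1 ht)
    exact eq_add_of_sub_eq' (DFunLike.congr_fun (Ring.mul_inverse_cancel _ hunit) D)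

end SpectralRadius

section Iterates

variable {R E : Type*} [Ring R] [AddCommGroup E] [Module R E] {T : Module.End R E} {D X : E}

theorem sum_pow_apply_eq_sub_of_eq_apply_add (hX : X = T X + D) (N : ℕ) :
    ∑ k ∈ Finset.range N, (T ^ k) D = X - (T ^ N) X := by
  have hD : D = (1 - T) X := (sub_eq_of_eq_add' hX).symm
  rw [← LinearMap.sum_apply, hD, ← Module.End.mul_apply, geom_sum_mul_neg]
  rfl

theorem eq_pow_apply_sub_add_of_forall_succ_eq (hX : X = T X + D) {S : ℕ → E}
    (hS : ∀ k, S (k + 1) = T (S k) + D) (k : ℕ) : S k = (T ^ k) (S 0 - X) + X := by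
  induction k with
  | zero => simp
  | succ k ih =>
    calc S (k + 1) = T ((T ^ k) (S 0 - X) + X) + D := by rw [hS, ← ih]
      _ = (T ^ (k + 1)) (S 0 - X) + (T X + D) := by
        rw [map_add, pow_succ', Module.End.mul_apply, add_assoc]
      _ = (T ^ (k + 1)) (S 0 - X) + X := by rw [← hX]

end Iterates

section PosSemidef

variable {𝕜 m n : Type*} [RCLike 𝕜]

theorem norm_apply_le_sqrt_of_posSemidef_fromBlocks {X : Matrix m m 𝕜} {Y : Matrix n n 𝕜}
    {Z : Matrix m n 𝕜} (h : (fromBlocks X Z Zᴴ Y).PosSemidef) (i : m) (j : n) :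
    ‖Z i j‖ ≤ √(RCLike.re (X i i * Y j j)) := by
  have hdet := (h.submatrix ![Sum.inl i, Sum.inr j]).det_nonneg
  rw [det_fin_two] at hdet
  refine Real.le_sqrt_of_sq_le ?_
  simpa [RCLike.mul_conj] using (RCLike.nonneg_iff.1 hdet).1

theorem tendsto_zero_of_posSemidef_fromBlocks {ι : Type*} {l : Filter ι}
    {X : ι → Matrix m m 𝕜} {Y : ι → Matrix n n 𝕜} {Z : ι → Matrix m n 𝕜}
    (h : ∀ k, (fromBlocks (X k) (Z k) (Z k)ᴴ (Y k)).PosSemidef)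
    (hX : ∀ i, Tendsto (fun k ↦ X k i i) l (𝓝 0)) (hY : ∀ j, Tendsto (fun k ↦ Y k j j) l (𝓝 0)) :
    Tendsto Z l (𝓝 0) := by
  refine tendsto_pi_nhds.2 fun i ↦ tendsto_pi_nhds.2 fun j ↦ ?_
  refine squeeze_zero_norm (fun k ↦ norm_apply_le_sqrt_of_posSemidef_fromBlocks (h k) i j) ?_
  have hmul : Tendsto (fun k ↦ X k i i * Y k j j) l (𝓝 0) := by
    simpa only [mul_zero] using (hX i).mul (hY j)
  have hsqrt : Tendsto (fun z : 𝕜 ↦ √(RCLike.re z)) (𝓝 0) (𝓝 0) :=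
    Continuous.tendsto' (by fun_prop) 0 0 (by simp)
  exact hsqrt.comp hmul

theorem tendsto_apply_self_zero_of_posSemidef_sub_sum {Y : ℕ → Matrix n n 𝕜} {X : Matrix n n 𝕜}
    (hY : ∀ k, (Y k).PosSemidef) (hX : ∀ N, (X - ∑ k ∈ Finset.range N, Y k).PosSemidef) (i : n) :
    Tendsto (fun k ↦ Y k i i) atTop (𝓝 0) := by
  have hnonneg (k : ℕ) := RCLike.nonneg_iff.1 ((hY k).diag_nonneg (i := i))
  have hsum : Summable fun k ↦ RCLike.re (Y k i i) := by
    refine summable_of_sum_range_le (c := RCLike.re (X i i)) (fun k ↦ (hnonneg k).1) fun N ↦ ?_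
    simpa [Matrix.sum_apply] using (RCLike.nonneg_iff.1 ((hX N).diag_nonneg (i := i))).1
  have hre (k : ℕ) : (RCLike.re (Y k i i) : 𝕜) = Y k i i :=
    RCLike.ext (by simp) (by simp [(hnonneg k).2])
  simpa only [Function.comp_def, hre, RCLike.ofReal_zero] using
    ((RCLike.continuous_ofReal (K := 𝕜)).tendsto 0).comp hsum.tendsto_atTop_zero

variable [Finite n]

theorem isClosed_setOf_posSemidef : IsClosed {M : Matrix n n 𝕜 | M.PosSemidef} := by
  have := Fintype.ofFinite n
  simp only [posSemidef_iff_dotProduct_mulVec, Matrix.IsHermitian, Set.ofPred_and,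
    Set.ofPred_forall]
  exact (isClosed_eq (by fun_prop) continuous_id).inter
    (isClosed_iInter fun v ↦ isClosed_le continuous_const (by fun_prop))

theorem eventually_posDef_of_isHermitian {M : Matrix n n 𝕜} (hM : M.PosDef) :
    ∀ᶠ N in 𝓝 M, N.IsHermitian → N.PosDef := by
  have := Fintype.ofFinite n
  have hcont : Continuous fun z : Matrix n n 𝕜 × (n → 𝕜) ↦
      RCLike.re (star z.2 ⬝ᵥ (z.1 *ᵥ z.2)) := by fun_prop
  have hsphere : ∀ᶠ N in 𝓝 M, ∀ v ∈ Metric.sphere (0 : n → 𝕜) 1,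
      0 < RCLike.re (star v ⬝ᵥ (N *ᵥ v)) :=
    (isCompact_sphere _ _).eventually_forall_of_forall_eventually fun v hv ↦
      continuousAt_const.eventually_lt hcont.continuousAt
        (hM.re_dotProduct_pos (ne_zero_of_mem_unit_sphere ⟨v, hv⟩))
  filter_upwards [hsphere] with N hN hNherm
  refine .of_dotProduct_mulVec_pos hNherm fun v hv ↦
    RCLike.pos_iff.2 ⟨?_, hNherm.im_star_dotProduct_mulVec_self v⟩
  have hunit := hN ((‖v‖⁻¹ : ℝ) • v) (by simp [norm_smul, hv])
  simpa [mulVec_smul, RCLike.smul_re, hv] using hunit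

theorem exists_posSemidef_fromBlocks_smul [Finite m] {X : Matrix m m 𝕜} (hX : X.PosDef)
    {Y : Matrix n n 𝕜} (hY : Y.PosDef) (Z : Matrix m n 𝕜) :
    ∃ ε : ℝ, ε ≠ 0 ∧ (fromBlocks X (ε • Z) (ε • Z)ᴴ Y).PosSemidef := by
  classical
  have := Fintype.ofFinite m
  have := Fintype.ofFinite n
  have := hX.isUnit.invertible
  let schur (ε : ℝ) : Matrix n n 𝕜 := Y - (ε • Z)ᴴ * X⁻¹ * (ε • Z)
  have hschur : ∀ ε, (schur ε).IsHermitian := fun ε ↦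
    hY.isHermitian.sub (isHermitian_conjTranspose_mul_mul _ hX.isHermitian.inv)
  have hlim : Tendsto schur (𝓝 0) (𝓝 Y) :=
    Continuous.tendsto' (by fun_prop) _ _ (by simp [schur])
  have hev : ∀ᶠ ε in 𝓝[≠] (0 : ℝ), (schur ε).PosDef :=
    ((hlim.eventually (eventually_posDef_of_isHermitian hY)).filter_mono
      nhdsWithin_le_nhds).mono fun ε h ↦ h (hschur ε)
  obtain ⟨ε, hpos, hε⟩ := (hev.and self_mem_nhdsWithin).exists
  exact ⟨ε, hε, (hX.fromBlocks₁₁ _ _).2 hpos.posSemidef⟩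

end PosSemidef

/-- A linear map `T` between matrix spaces is `2`-positive if applying it to each block of a
`2 × 2` block matrix preserves positive semidefiniteness. The upper right block is unconstrained,
which is how `2`-positivity controls `T` on matrices that are not Hermitian. -/
def IsTwoPositive {𝕜 m n : Type*} [RCLike 𝕜]
    (T : Matrix n n 𝕜 →ₗ[𝕜] Matrix m m 𝕜) : Prop :=
  ∀ X Z Y : Matrix n n 𝕜, (fromBlocks X Z Zᴴ Y).PosSemidef →
    (fromBlocks (T X) (T Z) (T Zᴴ) (T Y)).PosSemidef

namespace IsTwoPositive

section Maps

variable {𝕜 m n : Type*} [RCLike 𝕜] {T T' : Matrix n n 𝕜 →ₗ[𝕜] Matrix m m 𝕜}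

protected theorem zero : IsTwoPositive (0 : Matrix n n 𝕜 →ₗ[𝕜] Matrix m m 𝕜) := fun _ _ _ _ ↦ by
  simpa only [LinearMap.zero_apply, fromBlocks_zero] using PosSemidef.zero

protected theorem add (hT : IsTwoPositive T) (hT' : IsTwoPositive T') :
    IsTwoPositive (T + T') := fun X Z Y h ↦ by
  simpa only [LinearMap.add_apply, fromBlocks_add] using (hT X Z Y h).add (hT' X Z Y h)

protected theorem smul (hT : IsTwoPositive T) {c : 𝕜} (hc : 0 ≤ c) :
    IsTwoPositive (c • T) := fun X Z Y h ↦ by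
  simpa only [LinearMap.smul_apply, fromBlocks_smul] using (hT X Z Y h).smul hc

protected theorem sum {ι : Type*} {s : Finset ι} {F : ι → Matrix n n 𝕜 →ₗ[𝕜] Matrix m m 𝕜}
    (hF : ∀ i ∈ s, IsTwoPositive (F i)) : IsTwoPositive (∑ i ∈ s, F i) :=
  Finset.sum_induction F IsTwoPositive (fun _ _ ↦ .add) .zero hF

theorem map_posSemidef (hT : IsTwoPositive T) {X : Matrix n n 𝕜} (hX : X.PosSemidef) :
    (T X).PosSemidef := by
  have hblocks : (fromBlocks X X Xᴴ X).PosSemidef := by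
    rw [hX.isHermitian.eq, show fromBlocks X X X X = X.submatrix (Sum.elim id id) (Sum.elim id id)
      by ext (i | i) (j | j) <;> rfl]
    exact hX.submatrix _
  exact (hT X X X hblocks).submatrix Sum.inl

theorem map_conjTranspose [Finite n] (hT : IsTwoPositive T) (Z : Matrix n n 𝕜) :
    T Zᴴ = (T Z)ᴴ := by
  classical
  obtain ⟨ε, hε, hblocks⟩ := exists_posSemidef_fromBlocks_smul PosDef.one PosDef.one Z
  have hherm := (isHermitian_fromBlocks_iff.1 (hT _ _ _ hblocks).isHermitian).2.1
  simpa [hε] using hherm.symm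

protected theorem comp [Finite n] {l : Type*} {U : Matrix m m 𝕜 →ₗ[𝕜] Matrix l l 𝕜}
    (hU : IsTwoPositive U) (hT : IsTwoPositive T) : IsTwoPositive (U ∘ₗ T) := fun X Z Y h ↦ by
  have hTh := hT X Z Y h
  rw [hT.map_conjTranspose] at hTh
  simpa only [LinearMap.comp_apply, hT.map_conjTranspose] using hU _ _ _ hTh

end Maps

section End

variable {𝕜 n : Type*} [RCLike 𝕜] [Finite n] {T : Module.End 𝕜 (Matrix n n 𝕜)}

protected theorem pow (hT : IsTwoPositive T) (k : ℕ) : IsTwoPositive (T ^ k) := by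
  induction k with
  | zero => exact fun _ _ _ h ↦ h
  | succ k ih => exact pow_succ' T k ▸ hT.comp ih

theorem tendsto_pow_apply_zero (hT : IsTwoPositive T) {D X : Matrix n n 𝕜} (hD : D.PosDef)
    (hX : X.PosSemidef) (hXD : X = T X + D) (Z : Matrix n n 𝕜) :
    Tendsto (fun k ↦ (T ^ k) Z) atTop (𝓝 0) := by
  have hdiag (i : n) : Tendsto (fun k ↦ (T ^ k) D i i) atTop (𝓝 0) := by
    refine tendsto_apply_self_zero_of_posSemidef_sub_sum (X := X)
      (fun k ↦ (hT.pow k).map_posSemidef hD.posSemidef) (fun N ↦ ?_) i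
    rw [sum_pow_apply_eq_sub_of_eq_apply_add hXD, sub_sub_cancel]
    exact (hT.pow N).map_posSemidef hX
  obtain ⟨ε, hε, hblocks⟩ := exists_posSemidef_fromBlocks_smul hD hD Z
  have hscaled : Tendsto (fun k ↦ (T ^ k) (ε • Z)) atTop (𝓝 0) :=
    tendsto_zero_of_posSemidef_fromBlocks (fun k ↦ by
      simpa only [(hT.pow k).map_conjTranspose] using hT.pow k _ _ _ hblocks) hdiag hdiag
  simpa [smul_smul, hε] using hscaled.const_smul ε⁻¹

end End

end IsTwoPositive

section Positive

variable {𝕜 n : Type*} [RCLike 𝕜] [Finite n] {T : Module.End 𝕜 (Matrix n n 𝕜)}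

open scoped Matrix.Norms.Elementwise in
theorem exists_posDef_eq_apply_add (hpos : ∀ X : Matrix n n 𝕜, X.PosSemidef → (T X).PosSemidef)
    (hstar : ∀ X, T Xᴴ = (T X)ᴴ) (hT : spectralRadius 𝕜 T < 1) {D : Matrix n n 𝕜}
    (hD : D.PosDef) : ∃ X, X = T X + D ∧ X.PosDef := by
  have := Fintype.ofFinite n
  obtain ⟨X, hXcont, hX⟩ := exists_continuousOn_eq_smul_apply_add_of_spectralRadius_lt_one hT D
  have hball (t : unitInterval) : ((t : ℝ) : 𝕜) ∈ Metric.closedBall (0 : 𝕜) 1 := by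
    simpa [abs_of_nonneg t.2.1] using t.2.2
  let path (t : unitInterval) : Matrix n n 𝕜 := X (t : ℝ)
  have hcont : Continuous path := hXcont.comp_continuous (by fun_prop) hball
  have hpath (t : unitInterval) : path t = ((t : ℝ) : 𝕜) • T (path t) + D := hX _ (hball t)
  have hherm (t : unitInterval) : (path t).IsHermitian := by
    refine eq_of_eq_smul_apply_add_of_spectralRadius_lt_one hT
      (mem_closedBall_zero_iff.1 (hball t)) ?_ (hpath t)
    conv_lhs => rw [hpath t]
    simp [hstar, hD.isHermitian.eq]
  have hposDef {t : unitInterval} (ht : (path t).PosSemidef) : (path t).PosDef := by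
    rw [hpath t]
    exact hD.posSemidef_add ((hpos _ ht).smul (RCLike.ofReal_nonneg.2 t.2.1))
  have hclopen : IsClopen {t | (path t).PosSemidef} := by
    refine ⟨isClosed_setOf_posSemidef.preimage hcont, isOpen_iff_eventually.2 fun t ht ↦ ?_⟩
    have hnhds := eventually_posDef_of_isHermitian (hposDef ht)
    exact (hcont.continuousAt.eventually hnhds).mono fun s hs ↦ (hs (hherm s)).posSemidef
  have hzero : (path 0).PosSemidef := by
    rw [hpath 0]
    simpa using hD.posSemidef
  have hone : (path 1).PosSemidef := (hclopen.eq_univ ⟨0, hzero⟩).ge (Set.mem_univ 1)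
  exact ⟨path 1, by simpa using hpath 1, hposDef hone⟩

end Positive

theorem stmt1_general {𝕜 n : Type*} [RCLike 𝕜] [Finite n] {T : Module.End 𝕜 (Matrix n n 𝕜)}
    (hT : IsTwoPositive T) (hrad : spectralRadius 𝕜 T < 1) {D : Matrix n n 𝕜} (hD : D.PosDef) :
    ∃ X : Matrix n n 𝕜, X = T X + D ∧ (∀ Y, Y = T Y + D → Y = X) ∧ X.PosDef ∧
      ∀ S : ℕ → Matrix n n 𝕜, (∀ k, S (k + 1) = T (S k) + D) → Tendsto S atTop (𝓝 X) := by
  obtain ⟨X, hX, hXpos⟩ :=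
    exists_posDef_eq_apply_add (fun _ ↦ hT.map_posSemidef) hT.map_conjTranspose hrad hD
  refine ⟨X, hX, fun Y hY ↦ ?_, hXpos, fun S hS ↦ ?_⟩
  · exact eq_of_eq_smul_apply_add_of_spectralRadius_lt_one (t := 1) hrad (by simp)
      (by rwa [one_smul]) (by rwa [one_smul])
  · rw [funext (eq_pow_apply_sub_add_of_forall_succ_eq hX hS)]
    simpa using (hT.tendsto_pow_apply_zero hD hXpos.posSemidef hX (S 0 - X)).add_const X

theorem isTwoPositive_sandwich {n : ℕ} (M : Matrix (Fin n) (Fin n) ℝ) :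
    IsTwoPositive (sandwich M) := fun X Z Y h ↦ by
  have hconj := h.mul_mul_conjTranspose_same (fromBlocks M 0 0 M)
  simpa [sandwich, fromBlocks_conjTranspose, fromBlocks_multiply, Matrix.mul_assoc,
    fromBlocks_transpose] using hconj

theorem isTwoPositive_calT {n m p q : ℕ}
    (A : Matrix (Fin n) (Fin n) ℝ) (A' : Fin p → Matrix (Fin n) (Fin n) ℝ)
    (B : Matrix (Fin n) (Fin m) ℝ) (B' : Fin q → Matrix (Fin n) (Fin m) ℝ)
    {al : Fin p → ℝ} {be : Fin q → ℝ} (hal : ∀ i, 0 ≤ al i) (hbe : ∀ j, 0 ≤ be j)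
    (L : Matrix (Fin m) (Fin n) ℝ) : IsTwoPositive (calT A A' B B' al be L) :=
  ((isTwoPositive_sandwich _).add (.sum fun i _ ↦ (isTwoPositive_sandwich _).smul (hal i))).add
    (.sum fun j _ ↦ (isTwoPositive_sandwich _).smul (hbe j))

theorem stmt1 {n m p q : ℕ} (hn : 0 < n) (hm : 0 < m)
    (A : Matrix (Fin n) (Fin n) ℝ) (A' : Fin p → Matrix (Fin n) (Fin n) ℝ)
    (B : Matrix (Fin n) (Fin m) ℝ) (B' : Fin q → Matrix (Fin n) (Fin m) ℝ)
    (al : Fin p → ℝ) (be : Fin q → ℝ) (hal : ∀ i, 0 ≤ al i) (hbe : ∀ j, 0 ≤ be j)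
    (D : Matrix (Fin n) (Fin n) ℝ) (hD : D.PosDef)
    (L : Matrix (Fin m) (Fin n) ℝ)
    (hadm : Admissible A A' B B' al be L) :
    ∃ X : Matrix (Fin n) (Fin n) ℝ,
      X = calT A A' B B' al be L X + D ∧
      (∀ Y : Matrix (Fin n) (Fin n) ℝ, Y = calT A A' B B' al be L Y + D → Y = X) ∧
      X.PosDef ∧
      ∀ S : ℕ → Matrix (Fin n) (Fin n) ℝ, (S 0).PosSemidef →
        (∀ k, S (k + 1) = calT A A' B B' al be L (S k) + D) →
        Filter.Tendsto S Filter.atTop (nhds X) := by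
  obtain ⟨X, hX, huniq, hpos, hlim⟩ :=
    stmt1_general (isTwoPositive_calT A A' B B' hal hbe L) hadm hD
  exact ⟨X, hX, huniq, hpos, fun S _ hS ↦ hlim S hS⟩
end

section
/- Let the gain L ∈ ℝ^{m×n} be admissible, let P solve the stochastic Lyapunov equation P = 𝒯_L^*(P) + Q + Lᵀ R L, let X solve X = 𝒯_L(X) + D, and let Σ_{k+1} = 𝒯_L(Σ_k) + D with Σ_0 symmetric positive semidefinite. Then for every k the series Σ_{t=k}^∞ ( tr((Q + Lᵀ R L) Σ_t) − tr(P D) ) converges and equals tr(P Σ_k) + s̄, where s̄ = −tr(P X) is a constant independent of k and of Σ_k. In particular, the value function J(x_k) = E Σ_{t=k}^∞ (c(x_t,u_t) − λ) is the quadratic form E(x_kᵀ P x_k) plus a constant. -/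
open Matrix Filter Topology

/-!
A positive operator is governed by its real spectrum: let `T` preserve a closed, salient, solid cone
and let `1 - t T` be invertible for `t ∈ [0, 1]`. For `e` interior to the cone, the path
`x_t = (1 - t T)⁻¹ e` starts at `e` and cannot cross the boundary, because `x_t = t T x_t + e` is
interior as soon as it lies in the cone. Hence `x = x_1` is in the cone, the partial sums of
`∑ Tᵏ e` stay below `x`, and since every `y` lies between two multiples of `e`, all the series
`∑ Tᵏ y` converge.

The operator `𝒯_L` preserves a cone of this kind on *all* real matrices, the identity being an
interior point, so `Σ_t - X = 𝒯_L^t (Σ_0 - X)` is summable. By the adjointness of `𝒯_L` and `𝒯_L^*`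
under the trace pairing, the running cost minus `tr (P D)` is `tr (P Σ_t) - tr (P Σ_{t+1})`, and the
series telescopes.
-/

section PositiveOperators

open scoped Pointwise in
theorem add_mem_interior_of_mem {G S : Type*} [AddGroup G] [TopologicalSpace G]
    [IsTopologicalAddGroup G] [SetLike S G] [AddMemClass S G] (C : S) {x e : G} (hx : x ∈ C)
    (he : e ∈ interior (C : Set G)) : x + e ∈ interior (C : Set G) := by
  have hadd : (C : Set G) + interior (C : Set G) ⊆ interior (C : Set G) :=
    subset_interior_add_right.trans
      (interior_mono (Set.add_subset_iff.2 fun _ hx _ hy => add_mem hx hy))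
  exact hadd (Set.add_mem_add hx he)

theorem exists_pos_add_smul_mem_and_sub_smul_mem {E : Type*} [AddCommGroup E] [Module ℝ E]
    [TopologicalSpace E] [IsTopologicalAddGroup E] [ContinuousSMul ℝ E] {s : Set E} {e : E}
    (he : e ∈ interior s) (y : E) : ∃ ε > (0 : ℝ), e + ε • y ∈ s ∧ e - ε • y ∈ s := by
  have hadd : ∀ᶠ ε : ℝ in 𝓝 0, e + ε • y ∈ s :=
    ContinuousAt.preimage_mem_nhds (by fun_prop) (by simpa [mem_interior_iff_mem_nhds] using he)
  have hsub : ∀ᶠ ε : ℝ in 𝓝 0, e - ε • y ∈ s :=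
    ContinuousAt.preimage_mem_nhds (by fun_prop) (by simpa [mem_interior_iff_mem_nhds] using he)
  exact ((hadd.and hsub).filter_mono nhdsWithin_le_nhds |>.and
    (self_mem_nhdsWithin (s := Set.Ioi 0))).exists.imp fun _ h => ⟨h.2, h.1⟩

theorem pow_apply_mem_of_mapsTo {R E : Type*} [Semiring R] [AddCommMonoid E] [Module R E]
    [TopologicalSpace E] {T : E →L[R] E} {s : Set E} (hT : Set.MapsTo T s s) {x : E} (hx : x ∈ s)
    (k : ℕ) : (T ^ k) x ∈ s := by
  induction k with
  | zero => simpa using hx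
  | succ k ih =>
    rw [pow_succ']
    exact hT ih

theorem sum_range_pow_apply_of_eq_apply_add {R E : Type*} [Semiring R] [AddCommGroup E]
    [Module R E] [TopologicalSpace E] {T : E →L[R] E} {x e : E} (hx : x = T x + e) (N : ℕ) :
    ∑ k ∈ Finset.range N, (T ^ k) e = x - (T ^ N) x := by
  have he : e = x - T x := eq_sub_of_add_eq' hx.symm
  have hterm (k : ℕ) : (T ^ k) e = (T ^ k) x - (T ^ (k + 1)) x := by
    rw [he, map_sub, pow_succ]; rfl
  simp only [hterm, Finset.sum_range_sub']
  rfl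

theorem summable_of_forall_dual {ι E : Type*} [AddCommGroup E] [Module ℝ E] [TopologicalSpace E]
    [IsTopologicalAddGroup E] [ContinuousSMul ℝ E] [T2Space E] [FiniteDimensional ℝ E] {u : ι → E}
    {s : Set (Module.Dual ℝ E)}
    (hs : ∀ x ≠ 0, ∃ φ ∈ s, φ x ≠ 0) (hu : ∀ φ ∈ s, Summable fun i => φ (u i)) : Summable u := by
  have hall (φ : Module.Dual ℝ E) : Summable fun i => φ (u i) := by
    have hφ : φ ∈ Submodule.span ℝ s := Submodule.span_eq_top_of_ne_zero hs ▸ Submodule.mem_top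
    induction hφ using Submodule.span_induction with
    | mem φ hφ => exact hu φ hφ
    | zero => exact summable_zero
    | add φ ψ _ _ hφ hψ => exact hφ.add hψ
    | smul c φ _ hφ => exact hφ.mul_left c
  let b := Module.finBasis ℝ E
  exact b.equivFun.toContinuousLinearEquiv.summable.1 (Pi.summable.2 fun j => hall (b.coord j))

variable {E : Type*} [NormedAddCommGroup E] [NormedSpace ℝ E] {C : ProperCone ℝ E} {T : E →L[ℝ] E}

theorem exists_mem_eq_apply_add [CompleteSpace E] (hT : Set.MapsTo T C C)
    (hr : spectralRadius ℝ T < 1) {e : E} (he : e ∈ interior (C : Set E)) :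
    ∃ x ∈ C, x = T x + e := by
  have hr' : ((1 : NNReal) : ENNReal) < (spectralRadius ℝ T)⁻¹ := by simpa using hr
  have hball {t : ℝ} (ht : t ∈ Set.Icc (0 : ℝ) 1) : t ∈ Metric.closedBall (0 : ℝ) 1 := by
    simpa [abs_of_nonneg ht.1] using ht.2
  let f : ℝ → E := fun t => Ring.inverse (1 - t • T) e
  have hf : ContinuousOn f (Set.Icc 0 1) :=
    ((spectrum.differentiableOn_inverse_one_sub_smul hr').continuousOn.mono
      fun _ => hball).clm_apply continuousOn_const
  have hfix {t : ℝ} (ht : t ∈ Set.Icc (0 : ℝ) 1) : f t = t • T (f t) + e := by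
    have hunit : IsUnit (1 - t • T) :=
      spectrum.isUnit_one_sub_smul_of_lt_inv_radius
        (lt_of_le_of_lt (by simpa [← NNReal.coe_le_coe] using hball ht) hr')
    have happly : f t - t • T (f t) = e :=
      DFunLike.congr_fun (Ring.mul_inverse_cancel _ hunit) e
    exact sub_eq_iff_eq_add'.1 happly
  have hinterior : f '' Set.Icc 0 1 ⊆ interior (C : Set E) := by
    refine (isPreconnected_Icc.image f hf).subset_of_closure_inter_subset isOpen_interior
      ⟨f 0, ⟨0, by simp, rfl⟩, by simpa [f] using he⟩ ?_
    rintro _ ⟨hclosure, t, ht, rfl⟩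
    have hmem : f t ∈ C := closure_minimal interior_subset C.isClosed hclosure
    rw [hfix ht]
    exact add_mem_interior_of_mem C (C.smul_mem (hT hmem) ht.1) he
  have hone : (1 : ℝ) ∈ Set.Icc (0 : ℝ) 1 := by simp
  exact ⟨f 1, interior_subset (hinterior (Set.mem_image_of_mem f hone)), by simpa using hfix hone⟩

theorem summable_dual_pow_apply [CompleteSpace E] (hT : Set.MapsTo T C C)
    (hr : spectralRadius ℝ T < 1) (hC : (interior (C : Set E)).Nonempty) {φ : E →ₗ[ℝ] ℝ}
    (hφ : ∀ x ∈ C, 0 ≤ φ x) (y : E) : Summable fun k : ℕ => φ ((T ^ k) y) := by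
  obtain ⟨e, he⟩ := hC
  obtain ⟨x, hxC, hx⟩ := exists_mem_eq_apply_add hT hr he
  have heC : e ∈ C := interior_subset he
  have hsum : Summable fun k : ℕ => φ ((T ^ k) e) := by
    refine summable_of_sum_range_le (c := φ x)
      (fun k => hφ _ (pow_apply_mem_of_mapsTo hT heC k)) fun N => ?_
    rw [← map_sum, sum_range_pow_apply_of_eq_apply_add hx, map_sub]
    exact sub_le_self _ (hφ _ (pow_apply_mem_of_mapsTo hT hxC N))
  obtain ⟨ε, hε, hadd, hsub⟩ := exists_pos_add_smul_mem_and_sub_smul_mem he y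
  refine (hsum.mul_left ε⁻¹).of_norm_bounded fun k => ?_
  have h₁ := hφ _ (pow_apply_mem_of_mapsTo hT hadd k)
  have h₂ := hφ _ (pow_apply_mem_of_mapsTo hT hsub k)
  simp only [map_add, map_sub, map_smul, smul_eq_mul] at h₁ h₂
  have habs : |ε * φ ((T ^ k) y)| ≤ φ ((T ^ k) e) := abs_le.2 ⟨by linarith, by linarith⟩
  rwa [abs_mul, abs_of_pos hε, ← le_inv_mul_iff₀ hε] at habs

theorem summable_pow_apply_of_salient [FiniteDimensional ℝ E] (hC : (C : ConvexCone ℝ E).Salient)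
    (hCint : (interior (C : Set E)).Nonempty) {T : Module.End ℝ E} (hT : Set.MapsTo T C C)
    (hr : spectralRadius ℝ T < 1) (y : E) : Summable fun k : ℕ => (T ^ k) y := by
  have := FiniteDimensional.complete ℝ E
  let Φ := Module.End.toContinuousLinearMap (𝕜 := ℝ) E
  have hrΦ : spectralRadius ℝ (Φ T) < 1 := by
    rwa [spectralRadius, AlgEquiv.spectrum_eq]
  refine summable_of_forall_dual (s := {φ | ∀ x ∈ C, 0 ≤ φ x}) (fun x hx => ?_) fun φ hφ => ?_
  · have hnotMem : ∃ z ∉ C, z = x ∨ z = -x := by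
      by_cases hxC : x ∈ C
      · exact ⟨-x, hC x hxC hx, .inr rfl⟩
      · exact ⟨x, hxC, .inl rfl⟩
    obtain ⟨z, hz, hzx⟩ := hnotMem
    obtain ⟨φ, hφ, hφz⟩ := C.hyperplane_separation_point hz
    refine ⟨φ, hφ, fun h0 => hφz.ne ?_⟩
    have h0' : φ x = 0 := h0
    rcases hzx with rfl | rfl <;> simp [h0']
  · have h := summable_dual_pow_apply (T := Φ T) hT hrΦ hCint hφ y
    simp only [← map_pow] at h
    exact h

end PositiveOperators

section SectorCone

variable {m n : Type*} [Fintype m] [Fintype n]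

/-- The cone of real matrices `M` whose numerical range lies in the sector `|Im w| ≤ Re w` of the
complex plane: for `z = x + i y` the defining expression is `Re (z* M z) + Im (z* M z)`, and
replacing `z` by its conjugate changes the sign of the imaginary part. Unlike the cone of positive
semidefinite matrices it has interior points among all matrices, not only the symmetric ones. -/
def sectorCone (n : Type*) [Fintype n] : ProperCone ℝ (Matrix n n ℝ) where
  carrier := {M | ∀ x y : n → ℝ, 0 ≤ x ⬝ᵥ M *ᵥ (x + y) + y ⬝ᵥ M *ᵥ (y - x)}
  add_mem' := fun {M N} hM hN x y => by
    simp only [add_mulVec, dotProduct_add]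
    linarith [hM x y, hN x y]
  zero_mem' := by simp
  smul_mem' := fun c M hM x y => by
    have h := mul_nonneg c.2 (hM x y)
    change 0 ≤ x ⬝ᵥ ((c : ℝ) • M) *ᵥ (x + y) + y ⬝ᵥ ((c : ℝ) • M) *ᵥ (y - x)
    rwa [smul_mulVec, smul_mulVec, dotProduct_smul, dotProduct_smul, ← smul_add]
  isClosed' := by
    simp only [Set.ofPred_forall]
    exact isClosed_iInter fun x => isClosed_iInter fun y =>
      isClosed_le continuous_const (by fun_prop)

theorem mem_sectorCone {M : Matrix n n ℝ} :
    M ∈ sectorCone n ↔ ∀ x y : n → ℝ, 0 ≤ x ⬝ᵥ M *ᵥ (x + y) + y ⬝ᵥ M *ᵥ (y - x) :=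
  Iff.rfl

theorem dotProduct_mul_mul_transpose_mulVec {R : Type*} [CommSemiring R] (N : Matrix m n R)
    (M : Matrix n n R) (x y : m → R) : x ⬝ᵥ (N * M * Nᵀ) *ᵥ y = (Nᵀ *ᵥ x) ⬝ᵥ M *ᵥ (Nᵀ *ᵥ y) := by
  rw [Matrix.mul_assoc, ← mulVec_mulVec, ← mulVec_mulVec, dotProduct_mulVec,
    ← mulVec_transpose]

theorem mul_mul_transpose_mem_sectorCone (N : Matrix m n ℝ) {M : Matrix n n ℝ}
    (hM : M ∈ sectorCone n) : N * M * Nᵀ ∈ sectorCone m := fun x y => by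
  simpa only [dotProduct_mul_mul_transpose_mulVec, mulVec_add, mulVec_sub,
    dotProduct_add, dotProduct_sub] using
    hM (Nᵀ *ᵥ x) (Nᵀ *ᵥ y)

theorem salient_sectorCone : (sectorCone n : ConvexCone ℝ (Matrix n n ℝ)).Salient := by
  intro M hM hM0 hneg
  have hzero (x y : n → ℝ) : x ⬝ᵥ M *ᵥ (x + y) + y ⬝ᵥ M *ᵥ (y - x) = 0 := by
    have h := mem_sectorCone.1 hneg x y
    simp only [neg_mulVec, dotProduct_neg] at h
    linarith [mem_sectorCone.1 hM x y]
  have hform (x y : n → ℝ) : x ⬝ᵥ M *ᵥ y = 0 := by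
    have hx := hzero x 0
    have hy := hzero y 0
    have hxy := hzero x y
    have hadd := hzero (x + y) 0
    simp only [mulVec_add, mulVec_sub, dotProduct_add, dotProduct_sub, add_dotProduct,
      zero_dotProduct, add_zero] at hx hy hxy hadd
    linarith
  classical
  refine hM0 (Matrix.ext fun i j => ?_)
  simpa using hform (Pi.single i 1) (Pi.single j 1)

section Interior

open scoped Matrix.Norms.L2Operator

theorem dotProduct_mulVec_le_l2_opNorm [DecidableEq n] (M : Matrix n n ℝ) (x y : n → ℝ) :
    x ⬝ᵥ M *ᵥ y ≤ ‖M‖ * ‖WithLp.toLp 2 x‖ * ‖WithLp.toLp 2 y‖ := by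
  calc x ⬝ᵥ M *ᵥ y = inner ℝ (WithLp.toLp 2 (M *ᵥ y)) (WithLp.toLp 2 x) := by
        simp [EuclideanSpace.inner_toLp_toLp]
    _ ≤ ‖WithLp.toLp 2 (M *ᵥ y)‖ * ‖WithLp.toLp 2 x‖ := real_inner_le_norm _ _
    _ ≤ ‖M‖ * ‖WithLp.toLp 2 y‖ * ‖WithLp.toLp 2 x‖ := by
        gcongr
        exact l2_opNorm_mulVec M (WithLp.toLp 2 y)
    _ = _ := by ring

theorem one_mem_interior_sectorCone [DecidableEq n] :
    (1 : Matrix n n ℝ) ∈ interior (sectorCone n : Set (Matrix n n ℝ)) := by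
  refine mem_interior.2 ⟨Metric.ball 1 (1 / 2), fun M hM x y => ?_, Metric.isOpen_ball,
    Metric.mem_ball_self (by norm_num)⟩
  set a := ‖WithLp.toLp 2 x‖
  set b := ‖WithLp.toLp 2 y‖
  have hnorm : ‖1 - M‖ ≤ 1 / 2 := by
    rw [← dist_eq_norm, dist_comm]
    exact (Metric.mem_ball.1 hM).le
  have hsplit : x ⬝ᵥ M *ᵥ (x + y) + y ⬝ᵥ M *ᵥ (y - x) =
      x ⬝ᵥ x + y ⬝ᵥ y - (x ⬝ᵥ (1 - M) *ᵥ (x + y) + y ⬝ᵥ (1 - M) *ᵥ (y - x)) := by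
    simp only [sub_mulVec, one_mulVec, dotProduct_sub, dotProduct_add, dotProduct_comm y x]
    ring
  have hself (v : n → ℝ) : v ⬝ᵥ v = ‖WithLp.toLp 2 v‖ ^ 2 := by
    rw [EuclideanSpace.real_norm_sq_eq]
    simp only [dotProduct, sq]
  have hx : x ⬝ᵥ (1 - M) *ᵥ (x + y) ≤ 1 / 2 * a * (a + b) :=
    (dotProduct_mulVec_le_l2_opNorm _ _ _).trans (by gcongr; exact norm_add_le _ _)
  have hy : y ⬝ᵥ (1 - M) *ᵥ (y - x) ≤ 1 / 2 * b * (b + a) :=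
    (dotProduct_mulVec_le_l2_opNorm _ _ _).trans (by gcongr; exact norm_sub_le _ _)
  rw [hsplit, hself, hself]
  nlinarith [sq_nonneg (a - b)]

end Interior

end SectorCone

section ClosedLoop

theorem sandwich_apply {n : ℕ} (M X : Matrix (Fin n) (Fin n) ℝ) : sandwich M X = M * X * Mᵀ := by
  simp [sandwich, mul_assoc]

theorem trace_sandwich_transpose_mul {n : ℕ} (M P X : Matrix (Fin n) (Fin n) ℝ) :
    (sandwich Mᵀ P * X).trace = (P * sandwich M X).trace := by
  rw [sandwich_apply, sandwich_apply, transpose_transpose, mul_assoc, mul_assoc, trace_mul_comm]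
  simp only [mul_assoc]

variable {n m p q : ℕ} {A : Matrix (Fin n) (Fin n) ℝ} {A' : Fin p → Matrix (Fin n) (Fin n) ℝ}
  {B : Matrix (Fin n) (Fin m) ℝ} {B' : Fin q → Matrix (Fin n) (Fin m) ℝ}
  {al : Fin p → ℝ} {be : Fin q → ℝ} {L : Matrix (Fin m) (Fin n) ℝ}

theorem trace_calTstar_mul (P X : Matrix (Fin n) (Fin n) ℝ) :
    (calTstar A A' B B' al be L P * X).trace = (P * calT A A' B B' al be L X).trace := by
  simp only [calT, calTstar, LinearMap.add_apply, LinearMap.sum_apply, LinearMap.smul_apply,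
    add_mul, mul_add, Finset.sum_mul, Finset.mul_sum, trace_add, trace_sum, smul_mul_assoc,
    mul_smul_comm, trace_smul, trace_sandwich_transpose_mul]

theorem mapsTo_calT_sectorCone (hal : ∀ i, 0 ≤ al i) (hbe : ∀ j, 0 ≤ be j) :
    Set.MapsTo (calT A A' B B' al be L) (sectorCone (Fin n)) (sectorCone (Fin n)) := by
  intro M hM
  have hsandwich (N : Matrix (Fin n) (Fin n) ℝ) : sandwich N M ∈ sectorCone (Fin n) :=
    sandwich_apply N M ▸ mul_mul_transpose_mem_sectorCone N hM
  simp only [calT, LinearMap.add_apply, LinearMap.sum_apply, LinearMap.smul_apply]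
  exact add_mem
    (add_mem (hsandwich _) (sum_mem fun i _ => (sectorCone _).smul_mem (hsandwich _) (hal i)))
    (sum_mem fun j _ => (sectorCone _).smul_mem (hsandwich _) (hbe j))

open scoped Matrix.Norms.L2Operator in
theorem Admissible.summable_calT_pow_apply (hadm : Admissible A A' B B' al be L)
    (hal : ∀ i, 0 ≤ al i) (hbe : ∀ j, 0 ≤ be j) (Y : Matrix (Fin n) (Fin n) ℝ) :
    Summable fun k : ℕ => (calT A A' B B' al be L ^ k) Y :=
  summable_pow_apply_of_salient salient_sectorCone ⟨1, one_mem_interior_sectorCone⟩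
    (mapsTo_calT_sectorCone hal hbe) hadm Y

end ClosedLoop

theorem hasSum_sub_succ {G : Type*} [AddCommGroup G] [TopologicalSpace G] [IsTopologicalAddGroup G]
    [T2Space G] {u : ℕ → G} (hu : Summable u) : HasSum (fun t => u t - u (t + 1)) (u 0) := by
  have h := hu.hasSum.sub ((summable_nat_add_iff 1).2 hu).hasSum
  rwa [hu.tsum_eq_zero_add, add_sub_cancel_right] at h

theorem sub_eq_pow_apply_of_affine_recursion {R E : Type*} [Ring R] [AddCommGroup E] [Module R E]
    {T : Module.End R E} {s : ℕ → E} {x d : E} (hs : ∀ k, s (k + 1) = T (s k) + d)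
    (hx : x = T x + d) (k t : ℕ) : s (k + t) - x = (T ^ t) (s k - x) := by
  induction t with
  | zero => simp
  | succ t ih =>
    rw [pow_succ', Module.End.mul_apply, ← ih, map_sub, ← add_assoc, hs]
    nth_rewrite 1 [hx]
    abel

theorem stmt6_general {n m p q : ℕ}
    (A : Matrix (Fin n) (Fin n) ℝ) (A' : Fin p → Matrix (Fin n) (Fin n) ℝ)
    (B : Matrix (Fin n) (Fin m) ℝ) (B' : Fin q → Matrix (Fin n) (Fin m) ℝ)
    (al : Fin p → ℝ) (be : Fin q → ℝ) (hal : ∀ i, 0 ≤ al i) (hbe : ∀ j, 0 ≤ be j)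
    (W D : Matrix (Fin n) (Fin n) ℝ) (L : Matrix (Fin m) (Fin n) ℝ)
    (hadm : Admissible A A' B B' al be L)
    (P : Matrix (Fin n) (Fin n) ℝ) (hP : P = calTstar A A' B B' al be L P + W)
    (X : Matrix (Fin n) (Fin n) ℝ) (hX : X = calT A A' B B' al be L X + D)
    (S : ℕ → Matrix (Fin n) (Fin n) ℝ)
    (hrec : ∀ k, S (k + 1) = calT A A' B B' al be L (S k) + D) (k : ℕ) :
    HasSum (fun t : ℕ => (W * S (k + t)).trace - (P * D).trace)
      ((P * S k).trace + (-(P * X).trace)) := by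
  have hsum : Summable fun t => S (k + t) - X := by
    simpa only [sub_eq_pow_apply_of_affine_recursion hrec hX] using
      hadm.summable_calT_pow_apply hal hbe (S k - X)
  have htrace : Summable fun t => (P * (S (k + t) - X)).trace :=
    (hsum.mul_left P).map (traceAddMonoidHom (Fin n) ℝ) continuous_id.matrix_trace
  have hcost (t : ℕ) : (W * S (k + t)).trace - (P * D).trace =
      (P * (S (k + t) - X)).trace - (P * (S (k + (t + 1)) - X)).trace := by
    have hW : W = P - calTstar A A' B B' al be L P := eq_sub_of_add_eq' hP.symm
    rw [hW, sub_mul, trace_sub, trace_calTstar_mul, ← add_assoc, hrec]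
    simp only [mul_sub, mul_add, trace_sub, trace_add]
    ring
  have hvalue : (P * S k).trace + (-(P * X).trace) = (P * (S (k + 0) - X)).trace := by
    rw [mul_sub, trace_sub, add_zero, sub_eq_add_neg]
  rw [hvalue, funext hcost]
  exact hasSum_sub_succ htrace

theorem stmt6 {n m p q : ℕ} (hn : 0 < n) (hm : 0 < m)
    (A : Matrix (Fin n) (Fin n) ℝ) (A' : Fin p → Matrix (Fin n) (Fin n) ℝ)
    (B : Matrix (Fin n) (Fin m) ℝ) (B' : Fin q → Matrix (Fin n) (Fin m) ℝ)
    (al : Fin p → ℝ) (be : Fin q → ℝ) (hal : ∀ i, 0 ≤ al i) (hbe : ∀ j, 0 ≤ be j)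
    (Q : Matrix (Fin n) (Fin n) ℝ) (hQ : Q.PosSemidef)
    (R : Matrix (Fin m) (Fin m) ℝ) (hR : R.PosDef)
    (D : Matrix (Fin n) (Fin n) ℝ) (hD : D.PosDef)
    (L : Matrix (Fin m) (Fin n) ℝ)
    (hadm : Admissible A A' B B' al be L)
    (P : Matrix (Fin n) (Fin n) ℝ)
    (hP : P = calTstar A A' B B' al be L P + Q + Lᵀ * R * L)
    (X : Matrix (Fin n) (Fin n) ℝ)
    (hX : X = calT A A' B B' al be L X + D)
    (S : ℕ → Matrix (Fin n) (Fin n) ℝ) (hS0 : (S 0).PosSemidef)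
    (hrec : ∀ k, S (k + 1) = calT A A' B B' al be L (S k) + D) :
    ∀ k, HasSum
        (fun t : ℕ => ((Q + Lᵀ * R * L) * S (k + t)).trace - (P * D).trace)
        ((P * S k).trace + (-(P * X).trace)) := by
  exact stmt6_general A A' B B' al be hal hbe (Q + Lᵀ * R * L) D L hadm P
    (hP.trans (add_assoc _ _ _)) X hX S hrec
end

section
/- Let P be a symmetric positive semidefinite n×n real matrix and define the improved gain L' = −(R + Bᵀ P B + Σ_{j=1}^q β̄_j B_jᵀ P B_j)^{-1} Bᵀ P A. Then for every gain L ∈ ℝ^{m×n}, in the Loewner order, 𝒯_{L'}^*(P) + Q + L'ᵀ R L' ≤ 𝒯_L^*(P) + Q + Lᵀ R L; i.e., L' minimizes the one-step Lyapunov map over all gains. -/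
open Matrix Filter Topology

/-! As a function of the gain `L`, the one-step Lyapunov map is a constant plus the quadratic
`Lᴴ S L + Lᴴ G + Gᴴ L` with `S = R + Bᵀ P B + Σⱼ β̄ⱼ Bⱼᵀ P Bⱼ` and `G = Bᵀ P A`. If `L'` solves the
normal equation `S L' = -G`, completing the square shows that the excess of `L` over `L'` is exactly
`(L - L')ᴴ S (L - L')`, which is positive semidefinite as soon as `S` is. -/

section GainCost

variable {m n α : Type*} [Fintype m]

/-- The matrix-valued quadratic `K ↦ Kᴴ S K + Kᴴ G + Gᴴ K`: the part of a linear-quadratic cost that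
depends on the gain `K`, with quadratic weight `S` and cross term `G`. -/
def gainCost [NonUnitalSemiring α] [StarRing α] (S : Matrix m m α) (G K : Matrix m n α) :
    Matrix n n α :=
  Kᴴ * S * K + Kᴴ * G + Gᴴ * K

theorem gainCost_sub_gainCost [NonUnitalRing α] [StarRing α] {S : Matrix m m α}
    {G K₀ : Matrix m n α} (hS : S.IsHermitian) (hK₀ : S * K₀ = -G) (K : Matrix m n α) :
    gainCost S G K - gainCost S G K₀ = (K - K₀)ᴴ * S * (K - K₀) := by
  have hG : G = -(S * K₀) := by rw [hK₀, neg_neg]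
  have hGH : Gᴴ = -(K₀ᴴ * S) := by rw [hG, conjTranspose_neg, conjTranspose_mul, hS.eq]
  rw [gainCost, gainCost, hGH, hG]
  simp only [conjTranspose_sub, Matrix.mul_sub, Matrix.sub_mul, Matrix.mul_neg, Matrix.neg_mul,
    Matrix.mul_assoc]
  abel

theorem posSemidef_gainCost_sub_gainCost [Finite n] [Ring α] [PartialOrder α] [StarRing α]
    {S : Matrix m m α} {G K₀ : Matrix m n α} (hS : S.PosSemidef) (hK₀ : S * K₀ = -G)
    (K : Matrix m n α) : (gainCost S G K - gainCost S G K₀).PosSemidef := by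
  rw [gainCost_sub_gainCost hS.isHermitian hK₀]
  exact hS.conjTranspose_mul_mul_same (K - K₀)

theorem mul_neg_inv_mul_of_isUnit [DecidableEq m] [CommRing α] {S : Matrix m m α} (hS : IsUnit S)
    (G : Matrix m n α) : S * (-S⁻¹ * G) = -G := by
  rw [Matrix.neg_mul, Matrix.mul_neg,
    mul_nonsing_inv_cancel_left _ _ ((isUnit_iff_isUnit_det S).1 hS)]

end GainCost

section InputWeight

variable {m n κ : Type*} [Fintype n] [Fintype κ]

/-- The effective input weight `R + Bᵀ P B + Σⱼ β̄ⱼ Bⱼᵀ P Bⱼ`: the quadratic weight that the gain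
carries in the one-step Lyapunov map at `P`. -/
def inputWeight (B : Matrix n m ℝ) (B' : κ → Matrix n m ℝ) (be : κ → ℝ) (R : Matrix m m ℝ)
    (P : Matrix n n ℝ) : Matrix m m ℝ :=
  R + Bᵀ * P * B + ∑ j, be j • ((B' j)ᵀ * P * B' j)

theorem posDef_inputWeight [Finite m] (B : Matrix n m ℝ) (B' : κ → Matrix n m ℝ) {be : κ → ℝ}
    (hbe : ∀ j, 0 ≤ be j) {R : Matrix m m ℝ} (hR : R.PosDef) {P : Matrix n n ℝ}
    (hP : P.PosSemidef) : (inputWeight B B' be R P).PosDef := by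
  have hconj (M : Matrix n m ℝ) : (Mᵀ * P * M).PosSemidef := by
    simpa only [conjTranspose_eq_transpose_of_trivial] using hP.conjTranspose_mul_mul_same M
  have hsum : (∑ j, be j • ((B' j)ᵀ * P * B' j)).PosSemidef :=
    posSemidef_sum _ fun j _ => (hconj (B' j)).smul (hbe j)
  exact (hR.add_posSemidef (hconj B)).add_posSemidef hsum

end InputWeight

section LyapunovMap

variable {n m p q : ℕ} (A : Matrix (Fin n) (Fin n) ℝ) (A' : Fin p → Matrix (Fin n) (Fin n) ℝ)
  (B : Matrix (Fin n) (Fin m) ℝ) (B' : Fin q → Matrix (Fin n) (Fin m) ℝ)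
  (al : Fin p → ℝ) (be : Fin q → ℝ)

theorem sandwich_transpose_apply (M X : Matrix (Fin n) (Fin n) ℝ) :
    sandwich Mᵀ X = Mᵀ * X * M := by
  simp only [sandwich, LinearMap.comp_apply, LinearMap.mulLeft_apply, LinearMap.mulRight_apply,
    transpose_transpose, Matrix.mul_assoc]

theorem calTstar_apply (L : Matrix (Fin m) (Fin n) ℝ) (P : Matrix (Fin n) (Fin n) ℝ) :
    calTstar A A' B B' al be L P =
      (A + B * L)ᵀ * P * (A + B * L) + ∑ i, al i • ((A' i)ᵀ * P * A' i) +
        ∑ j, be j • ((B' j * L)ᵀ * P * (B' j * L)) := by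
  simp only [calTstar, LinearMap.add_apply, LinearMap.sum_apply, LinearMap.smul_apply,
    sandwich_transpose_apply]

theorem calTstar_add_eq_add_gainCost (Q : Matrix (Fin n) (Fin n) ℝ) (R : Matrix (Fin m) (Fin m) ℝ)
    {P : Matrix (Fin n) (Fin n) ℝ} (hP : P.IsSymm) (L : Matrix (Fin m) (Fin n) ℝ) :
    calTstar A A' B B' al be L P + Q + Lᵀ * R * L =
      (Aᵀ * P * A + ∑ i, al i • ((A' i)ᵀ * P * A' i) + Q) +
        gainCost (inputWeight B B' be R P) (Bᵀ * P * A) L := by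
  simp only [calTstar_apply, gainCost, inputWeight, conjTranspose_eq_transpose_of_trivial,
    transpose_transpose, transpose_add, transpose_mul, hP.eq, Matrix.mul_add, Matrix.add_mul,
    Matrix.mul_sum, Matrix.sum_mul, Matrix.mul_smul, Matrix.smul_mul, Matrix.mul_assoc]
  abel

theorem stmt8_general (Q : Matrix (Fin n) (Fin n) ℝ) {R : Matrix (Fin m) (Fin m) ℝ}
    {P : Matrix (Fin n) (Fin n) ℝ} (hP : P.IsSymm) (hS : (inputWeight B B' be R P).PosSemidef)
    {L' : Matrix (Fin m) (Fin n) ℝ} (hL' : inputWeight B B' be R P * L' = -(Bᵀ * P * A))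
    (L : Matrix (Fin m) (Fin n) ℝ) :
    ((calTstar A A' B B' al be L P + Q + Lᵀ * R * L) -
      (calTstar A A' B B' al be L' P + Q + L'ᵀ * R * L')).PosSemidef := by
  rw [calTstar_add_eq_add_gainCost A A' B B' al be Q R hP L,
    calTstar_add_eq_add_gainCost A A' B B' al be Q R hP L', add_sub_add_left_eq_sub]
  exact posSemidef_gainCost_sub_gainCost hS hL' L

end LyapunovMap

theorem stmt8 {n m p q : ℕ} (hn : 0 < n) (hm : 0 < m)
    (A : Matrix (Fin n) (Fin n) ℝ) (A' : Fin p → Matrix (Fin n) (Fin n) ℝ)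
    (B : Matrix (Fin n) (Fin m) ℝ) (B' : Fin q → Matrix (Fin n) (Fin m) ℝ)
    (al : Fin p → ℝ) (be : Fin q → ℝ) (hal : ∀ i, 0 ≤ al i) (hbe : ∀ j, 0 ≤ be j)
    (Q : Matrix (Fin n) (Fin n) ℝ) (hQ : Q.PosSemidef)
    (R : Matrix (Fin m) (Fin m) ℝ) (hR : R.PosDef)
    (P : Matrix (Fin n) (Fin n) ℝ) (hP : P.PosSemidef)
    (L' : Matrix (Fin m) (Fin n) ℝ)
    (hL' : L' = -(R + Bᵀ * P * B + ∑ j, be j • ((B' j)ᵀ * P * B' j))⁻¹ * (Bᵀ * P * A)) :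
    ∀ L : Matrix (Fin m) (Fin n) ℝ,
      ((calTstar A A' B B' al be L P + Q + Lᵀ * R * L) -
        (calTstar A A' B B' al be L' P + Q + L'ᵀ * R * L')).PosSemidef := by
  have hS := posDef_inputWeight B B' hbe hR hP
  exact stmt8_general A A' B B' al be Q (isHermitian_iff_isSymm.1 hP.isHermitian) hS.posSemidef
    (hL' ▸ mul_neg_inv_mul_of_isUnit hS.isUnit (Bᵀ * P * A))
end
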